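/- The number of involutions in Sₙ equals Σ_{λ ⊢ n} f_λ, and n! = Σ_{λ ⊢ n} f_λ², where f_λ is the number of standard Young tableaux of shape λ. -/

import Mathlib

/-- A standard Young tableau with `n` boxes, encoded by the positions
`pos 0, …, pos (n-1)` of the entries `1, …, n` (rows and columns 0-indexed,
coordinates `(row, column)`).  The conditions say: the positions are distinct, their
set is a Young diagram (down-closed), and entries increase along rows and columns. -/
def IsSYT (n : ℕ) (pos : Fin n → Fin n × Fin n) : Prop :=
  Function.Injective pos ∧
  (∀ (i : Fin n) (a b : Fin n), a ≤ (pos i).1 → b ≤ (pos i).2 → ∃ j, pos j = (a, b)) ∧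
  (∀ i j : Fin n,
    (((pos i).1 = (pos j).1 ∧ (pos i).2 < (pos j).2) ∨
     ((pos i).2 = (pos j).2 ∧ (pos i).1 < (pos j).1)) → i < j)

instance (n : ℕ) : DecidablePred (IsSYT n) := fun _ => by
  unfold IsSYT; infer_instance

/-- The type of standard Young tableaux with `n` boxes. -/
abbrev SYT (n : ℕ) := {pos : Fin n → Fin n × Fin n // IsSYT n pos}

/-- The length of row `r` of `T`. -/
def rowLen (n : ℕ) (T : SYT n) (r : Fin n) : ℕ :=
  (Finset.univ.filter fun i => (T.1 i).1 = r).card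

/-- The multiset of (nonzero) row lengths of `T`: its shape as a partition. -/
def rowMult (n : ℕ) (T : SYT n) : Multiset ℕ :=
  ((Finset.univ : Finset (Fin n)).val.map (rowLen n T)).filter (fun x => 0 < x)

/-!
The proof is Stanley's. Young's lattice is a `1`-differential poset: a diagram has one more upper
cover than it has lower covers, and two distinct diagrams have as many common upper covers as
common lower covers. Hence the linear operators `U` and `D` sending a diagram to the sum of its
upper, respectively lower, covers satisfy `D U = U D + 1`, and `D Uⁿ⁺¹ ∅ = (n + 1) Uⁿ ∅` follows
since `D ∅ = 0`. The coefficient of `λ` in `Uⁿ ∅` counts the saturated chains from `∅` to `λ`, that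
is, the standard tableaux of shape `λ`. As `U` and `D` are adjoint, the squared norm of `Uⁿ ∅` is
`n!`. Since `U f` and `D f + f` have the same coefficient sum, the coefficient sum `t n` of `Uⁿ ∅`
satisfies `t (n + 2) = t (n + 1) + (n + 1) t n`, which is also the recurrence for the number of
involutions: an involution of `n + 2` points either fixes the last point or exchanges it with one
of the other `n + 1`.
-/

open Finset

/-- An `r`-differential poset in the sense of Stanley, with the finite sets of upper and of lower
covers of an element as data. A rank function and a least element, which Stanley also asks for, are
left out of the structure. -/
structure DifferentialPoset (P : Type*) [PartialOrder P] [DecidableEq P] (r : ℕ) where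
  upCovers (x : P) : Finset P
  downCovers (x : P) : Finset P
  mem_upCovers {x y : P} : y ∈ upCovers x ↔ x ⋖ y
  mem_downCovers {x y : P} : y ∈ downCovers x ↔ y ⋖ x
  card_upCovers (x : P) : #(upCovers x) = #(downCovers x) + r
  card_upCovers_inter {x y : P} (h : x ≠ y) :
    #(upCovers x ∩ upCovers y) = #(downCovers x ∩ downCovers y)

namespace DifferentialPoset

variable {P : Type*} [PartialOrder P] [DecidableEq P] {r : ℕ} (X : DifferentialPoset P r)

theorem mem_upCovers_iff_mem_downCovers {x y : P} : y ∈ X.upCovers x ↔ x ∈ X.downCovers y :=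
  X.mem_upCovers.trans X.mem_downCovers.symm

/-- Stanley's operator `U`, sending an element to the sum of its upper covers. -/
noncomputable def up : (P →₀ ℕ) →ₗ[ℕ] P →₀ ℕ :=
  Finsupp.linearCombination ℕ fun x => ∑ y ∈ X.upCovers x, Finsupp.single y 1

/-- Stanley's operator `D`, sending an element to the sum of its lower covers. -/
noncomputable def down : (P →₀ ℕ) →ₗ[ℕ] P →₀ ℕ :=
  Finsupp.linearCombination ℕ fun x => ∑ y ∈ X.downCovers x, Finsupp.single y 1

theorem up_single (x : P) :
    X.up (Finsupp.single x 1) = ∑ y ∈ X.upCovers x, Finsupp.single y 1 := by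
  simp [up]

theorem down_single (x : P) :
    X.down (Finsupp.single x 1) = ∑ y ∈ X.downCovers x, Finsupp.single y 1 := by
  simp [down]

theorem up_apply (f : P →₀ ℕ) (y : P) : X.up f y = ∑ x ∈ X.downCovers y, f x := by
  suffices h : Finsupp.lapply y ∘ₗ X.up = ∑ x ∈ X.downCovers y, Finsupp.lapply x by
    simpa using congr($h f)
  ext x
  simp [up_single, Finsupp.single_apply, mem_upCovers_iff_mem_downCovers]

theorem down_apply (f : P →₀ ℕ) (x : P) : X.down f x = ∑ y ∈ X.upCovers x, f y := by
  suffices h : Finsupp.lapply x ∘ₗ X.down = ∑ y ∈ X.upCovers x, Finsupp.lapply y by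
    simpa using congr($h f)
  ext y
  simp [down_single, Finsupp.single_apply, mem_upCovers_iff_mem_downCovers]

theorem down_up_single_apply (x z : P) :
    X.down (X.up (Finsupp.single x 1)) z = #(X.upCovers z ∩ X.upCovers x) := by
  simp [down_apply, up_single, Finsupp.single_apply, inter_comm]

theorem up_down_single_apply (x z : P) :
    X.up (X.down (Finsupp.single x 1)) z = #(X.downCovers z ∩ X.downCovers x) := by
  simp [up_apply, down_single, Finsupp.single_apply, inter_comm]

theorem down_up (f : P →₀ ℕ) : X.down (X.up f) = X.up (X.down f) + r • f := by
  suffices h : X.down ∘ₗ X.up = X.up ∘ₗ X.down + r • LinearMap.id by simpa using congr($h f)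
  ext x z
  simp only [LinearMap.comp_apply, LinearMap.add_apply, LinearMap.smul_apply, LinearMap.id_apply,
    Finsupp.lsingle_apply, Finsupp.add_apply, Finsupp.smul_apply, down_up_single_apply,
    up_down_single_apply, smul_eq_mul]
  obtain rfl | hxz := eq_or_ne x z
  · simp [X.card_upCovers]
  · simp [X.card_upCovers_inter hxz.symm, hxz]

theorem degree_up (f : P →₀ ℕ) : (X.up f).degree = (X.down f).degree + r * f.degree := by
  suffices h : Finsupp.degree.comp X.up.toAddMonoidHom =
      Finsupp.degree.comp X.down.toAddMonoidHom + r • Finsupp.degree by simpa using congr($h f)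
  ext x
  simp [up_single, down_single, X.card_upCovers]

theorem linearCombination_up (f g : P →₀ ℕ) :
    Finsupp.linearCombination ℕ g (X.up f) = Finsupp.linearCombination ℕ (X.down g) f := by
  suffices h : Finsupp.linearCombination ℕ g ∘ₗ X.up = Finsupp.linearCombination ℕ (X.down g) by
    exact congr($h f)
  ext x
  simp [up_single, down_apply]

variable [OrderBot P]

/-- The vector `Uⁿ ⊥`, whose coefficient at `x` is the number of saturated chains of length `n`
from `⊥` to `x`. -/
noncomputable def chains : ℕ → P →₀ ℕ
  | 0 => Finsupp.single ⊥ 1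
  | n + 1 => X.up (chains n)

theorem chains_succ (n : ℕ) : X.chains (n + 1) = X.up (X.chains n) := rfl

theorem down_chains_zero : X.down (X.chains 0) = 0 := by
  have h : X.downCovers ⊥ = ∅ :=
    eq_empty_of_forall_notMem fun x hx => not_lt_bot (X.mem_downCovers.1 hx).lt
  rw [chains, down_single, h, sum_empty]

theorem down_chains_succ (n : ℕ) : X.down (X.chains (n + 1)) = (r * (n + 1)) • X.chains n := by
  induction n with
  | zero =>
    rw [chains_succ, down_up, down_chains_zero, map_zero, zero_add, Nat.zero_add, mul_one]
  | succ n ih =>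
    rw [chains_succ, down_up, ih, map_nsmul, ← chains_succ, ← add_nsmul, ← mul_add_one]

theorem sum_chains_sq (n : ℕ) :
    ((X.chains n).sum fun _ c => c ^ 2) = r ^ n * n.factorial := by
  have sum_sq (f : P →₀ ℕ) : (f.sum fun _ c => c ^ 2) = Finsupp.linearCombination ℕ f f := by
    rw [Finsupp.linearCombination_apply]
    exact Finsupp.sum_congr fun x _ => sq (f x)
  rw [sum_sq]
  induction n with
  | zero => simp [chains]
  | succ n ih =>
    rw [chains_succ, linearCombination_up, ← chains_succ, down_chains_succ]
    have : Finsupp.linearCombination ℕ (⇑((r * (n + 1)) • X.chains n)) (X.chains n) =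
        (r * (n + 1)) * Finsupp.linearCombination ℕ (X.chains n) (X.chains n) := by
      simp [Finsupp.linearCombination_apply, Finsupp.sum, mul_sum, mul_left_comm]
    rw [this, ih, Nat.factorial_succ]
    ring

theorem degree_chains_zero : (X.chains 0).degree = 1 := by
  simp [chains]

theorem degree_chains_one : (X.chains 1).degree = r := by
  rw [chains_succ, degree_up, down_chains_zero, degree_chains_zero, map_zero, zero_add, mul_one]

theorem degree_chains_add_two (n : ℕ) : (X.chains (n + 2)).degree =
    r * (X.chains (n + 1)).degree + r * (n + 1) * (X.chains n).degree := by
  rw [chains_succ, degree_up, down_chains_succ, map_nsmul, smul_eq_mul, add_comm]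

end DifferentialPoset

section ModularLattice

variable {α : Type*} [Lattice α] [IsModularLattice α]

theorem covBy_and_covBy_sup_iff_inf {a b : α} :
    a ⋖ a ⊔ b ∧ b ⋖ a ⊔ b ↔ a ⊓ b ⋖ a ∧ a ⊓ b ⋖ b :=
  ⟨fun h => ⟨inf_covBy_of_covBy_sup_right h.2, inf_covBy_of_covBy_sup_left h.1⟩,
    fun h => ⟨covBy_sup_of_inf_covBy_right h.2, covBy_sup_of_inf_covBy_left h.1⟩⟩

/-- Both sets of common covers have at most one element, `a ⊔ b` and `a ⊓ b` respectively, and by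
modularity the two are nonempty together. -/
theorem card_upCovers_inter_eq_card_downCovers_inter [DecidableEq α] {up down : α → Finset α}
    (mem_up : ∀ {a b}, b ∈ up a ↔ a ⋖ b) (mem_down : ∀ {a b}, b ∈ down a ↔ b ⋖ a)
    {a b : α} (hab : a ≠ b) : #(up a ∩ up b) = #(down a ∩ down b) := by
  by_cases h : a ⋖ a ⊔ b ∧ b ⋖ a ⊔ b
  · have hup : up a ∩ up b = {a ⊔ b} := by
      ext c
      simp only [mem_inter, mem_up, mem_singleton]
      exact ⟨fun hc => (hc.1.wcovBy.sup_eq hc.2.wcovBy hab).symm, fun hc => hc ▸ h⟩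
    have hdown : down a ∩ down b = {a ⊓ b} := by
      ext c
      simp only [mem_inter, mem_down, mem_singleton]
      exact ⟨fun hc => (hc.1.wcovBy.inf_eq hc.2.wcovBy hab).symm, fun hc =>
        hc ▸ covBy_and_covBy_sup_iff_inf.1 h⟩
    rw [hup, hdown, card_singleton, card_singleton]
  · have hup : up a ∩ up b = ∅ := by
      refine eq_empty_of_forall_notMem fun c hc => h ?_
      simp only [mem_inter, mem_up] at hc
      rwa [hc.1.wcovBy.sup_eq hc.2.wcovBy hab]
    have hdown : down a ∩ down b = ∅ := by
      refine eq_empty_of_forall_notMem fun c hc => h (covBy_and_covBy_sup_iff_inf.2 ?_)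
      simp only [mem_inter, mem_down] at hc
      rwa [hc.1.wcovBy.inf_eq hc.2.wcovBy hab]
    rw [hup, hdown]

end ModularLattice

section LinearExtensions

variable {α : Type*}

theorem image_eq_insert_image_init [DecidableEq α] {n : ℕ} (p : Fin (n + 1) → α) :
    univ.image p = insert (p (Fin.last n)) (univ.image fun i : Fin n => p i.castSucc) := by
  ext x
  simp [Fin.exists_fin_succ', or_comm, eq_comm]

variable [PartialOrder α]

open Classical in
/-- The maximal elements of a finite set. -/
noncomputable def maximals (s : Finset α) : Finset α := {c ∈ s | Maximal (· ∈ s) c}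

theorem mem_maximals {s : Finset α} {c : α} : c ∈ maximals s ↔ Maximal (· ∈ s) c := by
  simpa [maximals] using fun h : Maximal (· ∈ s) c => h.1

variable [DecidableEq α]

open Classical in
/-- The linear extensions of a finite set `s`, as enumerations `p 0, …, p (n - 1)` of `s`. There are
none unless `s` has `n` elements. -/
noncomputable def linearExtensions (n : ℕ) (s : Finset α) : Finset (Fin n → α) :=
  {p ∈ Fintype.piFinset fun _ => s | (∀ i j, p i ≤ p j → i ≤ j) ∧ univ.image p = s}

variable {n : ℕ} {s : Finset α}

theorem mem_linearExtensions {p : Fin n → α} :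
    p ∈ linearExtensions n s ↔ (∀ i j, p i ≤ p j → i ≤ j) ∧ univ.image p = s := by
  simp only [linearExtensions, mem_filter, Fintype.mem_piFinset, and_iff_right_iff_imp]
  rintro ⟨-, rfl⟩ i
  exact mem_image_of_mem p (mem_univ i)

theorem injective_of_mem_linearExtensions {p : Fin n → α} (hp : p ∈ linearExtensions n s) :
    Function.Injective p := fun i j hij =>
  le_antisymm ((mem_linearExtensions.1 hp).1 i j hij.le) ((mem_linearExtensions.1 hp).1 j i hij.ge)

theorem card_eq_of_mem_linearExtensions {p : Fin n → α} (hp : p ∈ linearExtensions n s) :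
    #s = n := by
  rw [← (mem_linearExtensions.1 hp).2, card_image_of_injective _
    (injective_of_mem_linearExtensions hp), card_univ, Fintype.card_fin]

theorem card_linearExtensions_zero : #(linearExtensions 0 s) = if s = ∅ then 1 else 0 := by
  have h (p : Fin 0 → α) : p ∈ linearExtensions 0 s ↔ s = ∅ := by
    simp [mem_linearExtensions, eq_comm]
  split_ifs with hs
  · rw [eq_univ_of_forall fun p => (h p).2 hs, card_univ, Fintype.card_unique]
  · exact card_eq_zero.2 (eq_empty_of_forall_notMem fun p hp => hs ((h p).1 hp))

theorem last_mem_maximals {p : Fin (n + 1) → α} (hp : p ∈ linearExtensions (n + 1) s) :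
    p (Fin.last n) ∈ maximals s := by
  obtain ⟨hmono, rfl⟩ := mem_linearExtensions.1 hp
  refine mem_maximals.2 ⟨mem_image_of_mem p (mem_univ _), fun x hx hle => ?_⟩
  obtain ⟨i, -, rfl⟩ := mem_image.1 hx
  exact (congrArg p (Fin.last_le_iff.1 (hmono _ _ hle))).le

theorem init_mem_linearExtensions {p : Fin (n + 1) → α} (hp : p ∈ linearExtensions (n + 1) s) :
    (fun i : Fin n => p i.castSucc) ∈ linearExtensions n (s.erase (p (Fin.last n))) := by
  obtain ⟨hmono, rfl⟩ := mem_linearExtensions.1 hp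
  have hlast : p (Fin.last n) ∉ univ.image fun i : Fin n => p i.castSucc := by
    simp [(injective_of_mem_linearExtensions hp).eq_iff, Fin.castSucc_ne_last]
  refine mem_linearExtensions.2 ⟨fun i j hij => hmono i.castSucc j.castSucc hij, ?_⟩
  rw [image_eq_insert_image_init p, erase_insert hlast]

theorem snoc_mem_linearExtensions {c : α} (hc : c ∈ maximals s) {q : Fin n → α}
    (hq : q ∈ linearExtensions n (s.erase c)) :
    (Fin.snoc q c : Fin (n + 1) → α) ∈ linearExtensions (n + 1) s := by
  obtain ⟨hmono, himage⟩ := mem_linearExtensions.1 hq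
  rw [mem_maximals] at hc
  have hmem (i : Fin n) : q i ∈ s.erase c := himage ▸ mem_image_of_mem q (mem_univ i)
  refine mem_linearExtensions.2 ⟨fun i j => ?_, ?_⟩
  · induction i using Fin.lastCases with
    | last =>
      induction j using Fin.lastCases with
      | last => exact fun _ => le_rfl
      | cast j =>
        simp only [Fin.snoc_last, Fin.snoc_castSucc]
        intro hle
        have hj := mem_erase.1 (hmem j)
        exact absurd (hc.eq_of_le hj.2 hle).symm hj.1
    | cast i =>
      induction j using Fin.lastCases with
      | last => exact fun _ => Fin.le_last _
      | cast j => simpa only [Fin.snoc_castSucc, Fin.castSucc_le_castSucc_iff] using hmono i j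
  · simp only [image_eq_insert_image_init, Fin.snoc_last, Fin.snoc_castSucc]
    rw [himage, insert_erase hc.1]

theorem card_linearExtensions_succ (n : ℕ) (s : Finset α) :
    #(linearExtensions (n + 1) s) = ∑ c ∈ maximals s, #(linearExtensions n (s.erase c)) := by
  rw [card_eq_sum_card_fiberwise fun p hp => last_mem_maximals hp]
  refine sum_congr rfl fun c hc => card_bij' (fun p _ i => p i.castSucc) (fun q _ => Fin.snoc q c)
    ?_ (fun q hq => ?_) ?_ (by simp)
  · simp only [mem_filter]
    rintro p ⟨hp, rfl⟩
    exact init_mem_linearExtensions hp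
  · simpa using snoc_mem_linearExtensions hc hq
  · simp only [mem_filter]
    rintro p ⟨-, rfl⟩
    exact Fin.snoc_init_self p

end LinearExtensions

section YoungLattice

theorem covBy_of_cells_eq_insert {μ ν : YoungDiagram} {c : ℕ × ℕ} (hc : c ∉ μ)
    (h : ν.cells = insert c μ.cells) : μ ⋖ ν := by
  let e : YoungDiagram ↪o Finset (ℕ × ℕ) :=
    ⟨⟨YoungDiagram.cells, fun _ _ => YoungDiagram.ext⟩, YoungDiagram.cells_subset_iff⟩
  refine CovBy.of_image e ?_
  change μ.cells ⋖ ν.cells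
  exact covBy_iff_exists_insert.2 ⟨c, hc, h.symm⟩

/-- The diagram `μ` together with all cells weakly above and to the left of `c`. Only the case that
`c` is a minimal non-cell of `μ`, so that `c` is the only new cell, is of interest. -/
def addCell (μ : YoungDiagram) (c : ℕ × ℕ) : YoungDiagram :=
  μ ⊔ ⟨Iic c, by simpa using isLowerSet_Iic c⟩

/-- The diagram `μ` without the cells weakly below and to the right of `c`. Only the case that `c`
is a maximal cell of `μ`, so that `c` is the only cell removed, is of interest. -/
def removeCell (μ : YoungDiagram) (c : ℕ × ℕ) : YoungDiagram where
  cells := {x ∈ μ.cells | ¬c ≤ x}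
  isLowerSet x y hyx hx := by
    simp only [coe_filter, Set.mem_ofPred_eq, YoungDiagram.mem_cells] at hx ⊢
    exact ⟨μ.isLowerSet hyx hx.1, fun hcy => hx.2 (hcy.trans hyx)⟩

variable {μ ν : YoungDiagram} {c : ℕ × ℕ}

theorem cells_addCell (hc : Minimal (· ∉ μ) c) : (addCell μ c).cells = insert c μ.cells := by
  ext x
  simp only [addCell, YoungDiagram.cells_sup, mem_union, mem_Iic, mem_insert,
    YoungDiagram.mem_cells]
  refine ⟨fun h => ?_, fun h => h.symm.imp_right le_of_eq⟩
  by_cases hx : x ∈ μ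
  · exact Or.inr hx
  · exact Or.inl (hc.eq_of_le hx (h.resolve_left hx))

theorem cells_removeCell (hc : Maximal (· ∈ μ) c) : (removeCell μ c).cells = μ.cells.erase c := by
  ext x
  simp only [removeCell, mem_filter, mem_erase, YoungDiagram.mem_cells, and_comm (a := x ≠ c)]
  exact and_congr_right fun hx =>
    not_congr ⟨fun hcx => (hc.eq_of_le hx hcx).symm, fun hxc => hxc.ge⟩

theorem covBy_addCell (hc : Minimal (· ∉ μ) c) : μ ⋖ addCell μ c :=
  covBy_of_cells_eq_insert hc.1 (cells_addCell hc)

theorem removeCell_covBy (hc : Maximal (· ∈ μ) c) : removeCell μ c ⋖ μ := by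
  refine covBy_of_cells_eq_insert (c := c) ?_ ?_
  · rw [← YoungDiagram.mem_cells, cells_removeCell hc]
    exact notMem_erase c _
  · rw [cells_removeCell hc, insert_erase hc.1]

theorem covBy_iff_exists_addCell : μ ⋖ ν ↔ ∃ c, Minimal (· ∉ μ) c ∧ addCell μ c = ν := by
  refine ⟨fun h => ?_, fun ⟨c, hc, hν⟩ => hν ▸ covBy_addCell hc⟩
  obtain ⟨c, hc⟩ := (ν.cells \ μ.cells).exists_minimal
    (sdiff_nonempty.2 (YoungDiagram.cells_subset_iff.not.2 h.lt.not_ge))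
  simp only [mem_sdiff, YoungDiagram.mem_cells] at hc
  have hmin : Minimal (· ∉ μ) c :=
    ⟨hc.1.2, fun x hx hxc => hc.2 ⟨ν.isLowerSet hxc hc.1.1, hx⟩ hxc⟩
  have hle : addCell μ c ≤ ν := by
    rw [← YoungDiagram.cells_subset_iff, cells_addCell hmin]
    exact insert_subset hc.1.1 (YoungDiagram.cells_subset_iff.2 h.le)
  exact ⟨c, hmin, (h.eq_or_eq (covBy_addCell hmin).le hle).resolve_left (covBy_addCell hmin).ne'⟩

theorem covBy_iff_exists_removeCell : ν ⋖ μ ↔ ∃ c, Maximal (· ∈ μ) c ∧ removeCell μ c = ν := by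
  refine ⟨fun h => ?_, fun ⟨c, hc, hν⟩ => hν ▸ removeCell_covBy hc⟩
  obtain ⟨c, hc⟩ := (μ.cells \ ν.cells).exists_maximal
    (sdiff_nonempty.2 (YoungDiagram.cells_subset_iff.not.2 h.lt.not_ge))
  simp only [mem_sdiff, YoungDiagram.mem_cells] at hc
  have hmax : Maximal (· ∈ μ) c :=
    ⟨hc.1.1, fun x hx hcx => hc.2 ⟨hx, fun hxν => hc.1.2 (ν.isLowerSet hcx hxν)⟩ hcx⟩
  have hle : ν ≤ removeCell μ c := by
    rw [← YoungDiagram.cells_subset_iff, cells_removeCell hmax]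
    exact subset_erase.2 ⟨YoungDiagram.cells_subset_iff.2 h.le, hc.1.2⟩
  exact ⟨c, hmax,
    (h.eq_or_eq hle (removeCell_covBy hmax).le).resolve_right (removeCell_covBy hmax).ne⟩

theorem maximal_cell_iff {i j : ℕ} :
    Maximal (· ∈ μ) (i, j) ↔ j + 1 = μ.rowLen i ∧ μ.rowLen (i + 1) ≤ j := by
  constructor
  · intro h
    have hrow : (i, j) ∈ μ := h.1
    have hright : (i, j + 1) ∉ μ := fun hmem => by simpa using h.2 hmem (by simp)
    have hbelow : (i + 1, j) ∉ μ := fun hmem => by simpa using h.2 hmem (by simp)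
    rw [YoungDiagram.mem_iff_lt_rowLen] at hrow hright hbelow
    lia
  · rintro ⟨hrow, hbelow⟩
    refine ⟨YoungDiagram.mem_iff_lt_rowLen.2 (by lia), fun ⟨a, b⟩ hmem hle => ?_⟩
    simp only [YoungDiagram.mem_iff_lt_rowLen, Prod.mk_le_mk] at hmem hle ⊢
    obtain hia | rfl := hle.1.lt_or_eq
    · have := μ.rowLen_anti (i + 1) a hia
      lia
    · lia

theorem minimal_nonCell_iff {i j : ℕ} :
    Minimal (· ∉ μ) (i, j) ↔ j = μ.rowLen i ∧ (i = 0 ∨ μ.rowLen i < μ.rowLen (i - 1)) := by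
  constructor
  · intro h
    have hrow : (i, j) ∉ μ := h.1
    have hleft : (i, μ.rowLen i) ∉ μ := by simp [YoungDiagram.mem_iff_lt_rowLen]
    rw [YoungDiagram.mem_iff_lt_rowLen, not_lt] at hrow
    have hj : j = μ.rowLen i := hrow.antisymm' (h.2 hleft ⟨le_rfl, hrow⟩).2
    refine ⟨hj, or_iff_not_imp_left.2 fun hi => ?_⟩
    by_contra habove
    have hmem : (i - 1, j) ∉ μ := by rwa [YoungDiagram.mem_iff_lt_rowLen, hj]
    have := (h.2 hmem ⟨Nat.sub_le i 1, le_rfl⟩).1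
    lia
  · rintro ⟨rfl, habove⟩
    refine ⟨by simp [YoungDiagram.mem_iff_lt_rowLen], fun ⟨a, b⟩ hmem hle => ?_⟩
    simp only [YoungDiagram.mem_iff_lt_rowLen, Prod.mk_le_mk, not_lt] at hmem hle ⊢
    obtain hai | rfl := hle.1.lt_or_eq
    · have := μ.rowLen_anti a (i - 1) (by lia)
      lia
    · exact ⟨le_rfl, hmem⟩

/-- The minimal non-cells of `μ`: one at the end of row `0`, and one at the end of the row
following each row that contains a maximal cell. -/
noncomputable def outerCorners (μ : YoungDiagram) : Finset (ℕ × ℕ) :=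
  insert (0, μ.rowLen 0) ((maximals μ.cells).image fun c => (c.1 + 1, μ.rowLen (c.1 + 1)))

theorem mem_outerCorners : c ∈ outerCorners μ ↔ Minimal (· ∉ μ) c := by
  obtain ⟨i, j⟩ := c
  rw [minimal_nonCell_iff]
  simp only [outerCorners, mem_insert, mem_image, mem_maximals, YoungDiagram.mem_cells,
    Prod.exists, maximal_cell_iff, Prod.mk.injEq]
  cases i with
  | zero => simp
  | succ i =>
    simp only [Nat.add_eq_zero_iff, one_ne_zero, and_false, false_and, false_or,
      Nat.add_right_cancel_iff, Nat.add_sub_cancel]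
    constructor
    · rintro ⟨a, b, ⟨hb, hlt⟩, rfl, rfl⟩
      exact ⟨rfl, by lia⟩
    · rintro ⟨rfl, hlt⟩
      exact ⟨i, μ.rowLen i - 1, ⟨by lia, by lia⟩, rfl, rfl⟩

theorem card_outerCorners : #(outerCorners μ) = #(maximals μ.cells) + 1 := by
  rw [outerCorners, card_insert_of_notMem (by simp), card_image_of_injOn]
  rintro ⟨i, j⟩ hij ⟨i', j'⟩ hij' h
  simp only [mem_coe, mem_maximals, YoungDiagram.mem_cells, maximal_cell_iff] at hij hij'
  obtain rfl : i = i' := by simpa using congrArg Prod.fst h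
  rw [Prod.mk.injEq]
  lia

theorem addCell_injOn : Set.InjOn (addCell μ) (outerCorners μ) := by
  intro c hc d hd h
  rw [mem_coe, mem_outerCorners] at hc hd
  rw [← insert_inj (s := μ.cells) hc.1, ← cells_addCell hc, ← cells_addCell hd, h]

theorem removeCell_injOn : Set.InjOn (removeCell μ) (maximals μ.cells) := by
  intro c hc d hd h
  rw [mem_coe, mem_maximals] at hc hd
  rw [← erase_inj μ.cells hc.1, ← cells_removeCell hc, ← cells_removeCell hd, h]

noncomputable instance : DecidableEq YoungDiagram := Classical.decEq _

theorem mem_image_addCell : ν ∈ (outerCorners μ).image (addCell μ) ↔ μ ⋖ ν := by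
  simp only [mem_image, mem_outerCorners, covBy_iff_exists_addCell]

theorem mem_image_removeCell : ν ∈ (maximals μ.cells).image (removeCell μ) ↔ ν ⋖ μ := by
  simp only [mem_image, mem_maximals, YoungDiagram.mem_cells, covBy_iff_exists_removeCell]

/-- Young's lattice as a `1`-differential poset. -/
noncomputable def youngLattice : DifferentialPoset YoungDiagram 1 where
  upCovers μ := (outerCorners μ).image (addCell μ)
  downCovers μ := (maximals μ.cells).image (removeCell μ)
  mem_upCovers := mem_image_addCell
  mem_downCovers := mem_image_removeCell
  card_upCovers μ := by
    rw [card_image_of_injOn addCell_injOn, card_image_of_injOn removeCell_injOn, card_outerCorners]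
  card_upCovers_inter :=
    card_upCovers_inter_eq_card_downCovers_inter mem_image_addCell mem_image_removeCell

theorem chains_youngLattice (n : ℕ) (μ : YoungDiagram) :
    youngLattice.chains n μ = #(linearExtensions n μ.cells) := by
  induction n generalizing μ with
  | zero =>
    simp [DifferentialPoset.chains, Finsupp.single_apply, card_linearExtensions_zero,
      YoungDiagram.ext_iff, eq_comm]
  | succ n ih =>
    rw [DifferentialPoset.chains_succ, DifferentialPoset.up_apply, card_linearExtensions_succ]
    change ∑ ν ∈ (maximals μ.cells).image (removeCell μ), youngLattice.chains n ν = _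
    rw [sum_image removeCell_injOn]
    refine sum_congr rfl fun c hc => ?_
    rw [ih, cells_removeCell (mem_maximals.1 hc)]

end YoungLattice

section Partitions

theorem coe_rowLens_inj {μ ν : YoungDiagram} :
    (μ.rowLens : Multiset ℕ) = ν.rowLens ↔ μ = ν := by
  refine ⟨fun h => YoungDiagram.equivListRowLens.injective (Subtype.ext ?_), fun h => h ▸ rfl⟩
  exact (Multiset.coe_eq_coe.1 h).eq_of_sortedGE μ.rowLens_sorted ν.rowLens_sorted

theorem sum_rowLens (μ : YoungDiagram) : μ.rowLens.sum = μ.card := by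
  have hmaps : ∀ c ∈ μ.cells, c.1 ∈ range (μ.colLen 0) := fun c hc =>
    mem_range.2 (YoungDiagram.mem_iff_lt_colLen.1 (μ.up_left_mem le_rfl (Nat.zero_le c.2) hc))
  rw [YoungDiagram.card, card_eq_sum_card_fiberwise hmaps, YoungDiagram.rowLens,
    ← List.sum_toFinset _ List.nodup_range, List.toFinset_range]
  exact sum_congr rfl fun i _ => μ.rowLen_eq_card

/-- The Young diagram whose row lengths are the parts of a partition. -/
def ofPartition {n : ℕ} (p : n.Partition) : YoungDiagram :=
  YoungDiagram.ofRowLens (p.parts.sort (· ≥ ·)) (Multiset.pairwise_sort _ _).sortedGE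

variable {n : ℕ}

theorem rowLens_ofPartition (p : n.Partition) :
    ((ofPartition p).rowLens : Multiset ℕ) = p.parts := by
  rw [ofPartition, YoungDiagram.rowLens_ofRowLens_eq_self, Multiset.sort_eq]
  exact fun x hx => p.parts_pos ((Multiset.mem_sort _).1 hx)

theorem ofPartition_injective : Function.Injective (ofPartition (n := n)) := fun p q h =>
  Nat.Partition.ext (by rw [← rowLens_ofPartition, h, rowLens_ofPartition])

theorem exists_ofPartition_eq {μ : YoungDiagram} (hμ : μ.card = n) :
    ∃ p : n.Partition, ofPartition p = μ := by
  refine ⟨⟨μ.rowLens, fun hi => μ.pos_of_mem_rowLens _ hi, ?_⟩, ?_⟩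
  · rw [Multiset.sum_coe, sum_rowLens, hμ]
  · rw [← coe_rowLens_inj, rowLens_ofPartition]

theorem sum_ofPartition {f : YoungDiagram →₀ ℕ} (hf : ∀ μ ∈ f.support, μ.card = n)
    {g : ℕ → ℕ} (hg : g 0 = 0) :
    ∑ p : n.Partition, g (f (ofPartition p)) = f.sum fun _ => g := by
  have hsupport : f.support ⊆ univ.image (ofPartition (n := n)) := fun μ hμ =>
    mem_image_univ_iff_mem_range.2 (exists_ofPartition_eq (hf μ hμ))
  rw [f.sum_of_support_subset hsupport _ fun _ _ => hg, sum_image ofPartition_injective.injOn]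

theorem card_eq_of_mem_support_chains_youngLattice {μ : YoungDiagram}
    (hμ : μ ∈ (youngLattice.chains n).support) : μ.card = n := by
  rw [Finsupp.mem_support_iff, chains_youngLattice, card_ne_zero] at hμ
  exact card_eq_of_mem_linearExtensions hμ.choose_spec

end Partitions

section Tableaux

variable {n : ℕ} {ν : YoungDiagram}

theorem isSYT_iff {pos : Fin n → Fin n × Fin n} :
    IsSYT n pos ↔ IsLowerSet (Set.range pos) ∧ ∀ i j, pos i ≤ pos j → i ≤ j := by
  constructor
  · rintro ⟨hinj, hlower, hlt⟩
    refine ⟨?_, fun i j hij => ?_⟩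
    · rintro _ ⟨a, b⟩ hle ⟨i, rfl⟩
      exact hlower i a b hle.1 hle.2
    · obtain ⟨k, hk⟩ := hlower j (pos i).1 (pos j).2 hij.1 le_rfl
      have hik : i ≤ k := by
        obtain h | h := hij.2.eq_or_lt
        · exact (hinj (by rw [hk, ← h])).le
        · exact (hlt i k (Or.inl (by simp [hk, h]))).le
      have hkj : k ≤ j := by
        obtain h | h := hij.1.eq_or_lt
        · exact (hinj (by rw [hk, h])).le
        · exact (hlt k j (Or.inr (by simp [hk, h]))).le
      exact hik.trans hkj
  · rintro ⟨hlower, hle⟩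
    have hinj : Function.Injective pos := fun i j hij =>
      le_antisymm (hle i j hij.le) (hle j i hij.ge)
    refine ⟨hinj, fun i a b ha hb => hlower ⟨ha, hb⟩ ⟨i, rfl⟩, fun i j hij => ?_⟩
    have hlt : pos i < pos j := Prod.lt_iff.2 (hij.symm.imp
      (fun h => ⟨h.2, h.1.le⟩) fun h => ⟨h.1.le, h.2⟩)
    exact (hle i j hlt.le).lt_of_ne fun h => hlt.ne (congrArg pos h)

/-- The cell of a standard tableau containing its `i`-th entry. -/
def cell (T : SYT n) (i : Fin n) : ℕ × ℕ := ((T.1 i).1, (T.1 i).2)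

theorem cell_injective : Function.Injective (cell (n := n)) := fun _ _ h =>
  Subtype.ext (funext fun i => Prod.ext (Fin.ext congr(($h i).1)) (Fin.ext congr(($h i).2)))

/-- The shape of a standard tableau, as a Young diagram. -/
def shape (T : SYT n) : YoungDiagram where
  cells := univ.image (cell T)
  isLowerSet := by
    rintro _ ⟨a, b⟩ hle hmem
    obtain ⟨i, -, rfl⟩ := mem_image.1 (mem_coe.1 hmem)
    let c : Fin n × Fin n :=
      (⟨a, hle.1.trans_lt (T.1 i).1.2⟩, ⟨b, hle.2.trans_lt (T.1 i).2.2⟩)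
    have hc : c ≤ T.1 i := hle
    obtain ⟨j, hj⟩ := (isSYT_iff.1 T.2).1 hc ⟨i, rfl⟩
    exact mem_image.2 ⟨j, mem_univ j, by rw [cell, hj]⟩

theorem cell_mem_linearExtensions {T : SYT n} :
    cell T ∈ linearExtensions n ν.cells ↔ shape T = ν := by
  rw [mem_linearExtensions, YoungDiagram.ext_iff]
  exact and_iff_right (isSYT_iff.1 T.2).2

theorem card_shape (T : SYT n) : (shape T).card = n :=
  card_eq_of_mem_linearExtensions (cell_mem_linearExtensions.2 rfl)

theorem fst_lt_card {c : ℕ × ℕ} (hc : c ∈ ν) : c.1 < ν.card :=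
  (YoungDiagram.mem_iff_lt_colLen.1 hc).trans_le
    (ν.colLen_eq_card.trans_le (card_le_card (filter_subset _ _)))

theorem snd_lt_card {c : ℕ × ℕ} (hc : c ∈ ν) : c.2 < ν.card :=
  (YoungDiagram.mem_iff_lt_rowLen.1 hc).trans_le
    (ν.rowLen_eq_card.trans_le (card_le_card (filter_subset _ _)))

theorem exists_cell_eq {p : Fin n → ℕ × ℕ} (hp : p ∈ linearExtensions n ν.cells) :
    ∃ T : SYT n, cell T = p := by
  obtain rfl : ν.card = n := card_eq_of_mem_linearExtensions hp
  obtain ⟨hmono, himage⟩ := mem_linearExtensions.1 hp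
  have hmem (i) : p i ∈ ν := (himage ▸ mem_image_of_mem p (mem_univ i) : p i ∈ ν.cells)
  refine ⟨⟨fun i => (⟨(p i).1, fst_lt_card (hmem i)⟩, ⟨(p i).2, snd_lt_card (hmem i)⟩),
    isSYT_iff.2 ⟨?_, hmono⟩⟩, rfl⟩
  rintro _ ⟨a, b⟩ hle ⟨i, rfl⟩
  have hab : ((a : ℕ), (b : ℕ)) ∈ univ.image p :=
    himage ▸ ν.up_left_mem hle.1 hle.2 (hmem i)
  obtain ⟨j, -, hj⟩ := mem_image.1 hab
  exact ⟨j, Prod.ext (Fin.ext congr($hj.1)) (Fin.ext congr($hj.2))⟩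

theorem natCard_shape_eq : Nat.card {T : SYT n // shape T = ν} = #(linearExtensions n ν.cells) := by
  rw [← Nat.card_eq_finsetCard]
  refine Nat.card_eq_of_bijective (fun T => ⟨cell T.1, cell_mem_linearExtensions.2 T.2⟩)
    ⟨fun T T' h => Subtype.ext (cell_injective congr($h.1)), fun ⟨p, hp⟩ => ?_⟩
  obtain ⟨T, rfl⟩ := exists_cell_eq hp
  exact ⟨⟨T, cell_mem_linearExtensions.1 hp⟩, rfl⟩

theorem rowLen_shape (T : SYT n) (i : Fin n) : (shape T).rowLen i = rowLen n T i := by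
  have hinj : Function.Injective (cell T) :=
    injective_of_mem_linearExtensions (cell_mem_linearExtensions.2 rfl)
  rw [YoungDiagram.rowLen_eq_card, YoungDiagram.row, rowLen, shape, filter_image,
    card_image_of_injective _ hinj]
  simp only [cell, Fin.val_inj]

theorem rowMult_eq_rowLens (T : SYT n) : rowMult n T = (shape T).rowLens := by
  have hmap : univ.val.map (rowLen n T) = (Multiset.range n).map (shape T).rowLen := by
    simp only [← Nat.Iio_eq_range, ← Fin.map_valEmbedding_univ, ← range_val, map_val,
      Multiset.map_map, Function.comp_def, Fin.valEmbedding_apply, rowLen_shape]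
  have hrows : {i ∈ range n | 0 < (shape T).rowLen i} = range ((shape T).colLen 0) := by
    ext i
    simp only [mem_filter, mem_range, ← YoungDiagram.mem_iff_lt_rowLen,
      ← YoungDiagram.mem_iff_lt_colLen, and_iff_right_iff_imp]
    exact fun hi => (fst_lt_card hi).trans_eq (card_shape T)
  rw [rowMult, hmap, Multiset.filter_map, YoungDiagram.rowLens, ← Multiset.map_coe,
    Multiset.coe_range]
  exact congrArg (Multiset.map _) congr(($hrows).val)

theorem natCard_rowMult_eq (p : n.Partition) :
    Nat.card {T : SYT n // rowMult n T = p.parts} = youngLattice.chains n (ofPartition p) := by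
  simp only [rowMult_eq_rowLens, ← rowLens_ofPartition, coe_rowLens_inj]
  rw [natCard_shape_eq, chains_youngLattice]

end Tableaux

section Involutions

open Equiv

variable {α β : Type*}

/-- The number of involutions of `α`, the identity included (`0` if there are infinitely many). -/
noncomputable def numInvolutions (α : Type*) : ℕ := Nat.card {w : Perm α // w * w = 1}

theorem numInvolutions_congr (e : α ≃ β) : numInvolutions α = numInvolutions β :=
  Nat.card_congr <| e.permCongrHom.toEquiv.subtypeEquiv fun w => by
    change w * w = 1 ↔ e.permCongrHom w * e.permCongrHom w = 1
    rw [← map_mul, MulEquiv.map_eq_one_iff]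

theorem numInvolutions_of_subsingleton [Subsingleton α] : numInvolutions α = 1 :=
  Nat.card_eq_one_iff_unique.2 ⟨inferInstance, ⟨1, mul_one 1⟩⟩

theorem natCard_involutions_fixing (p : α → Prop) :
    Nat.card {w : Perm α // (∀ x, ¬p x → w x = x) ∧ w * w = 1} = numInvolutions {x // p x} := by
  classical
  rw [← Nat.card_congr (subtypeSubtypeEquivSubtypeInter _ _)]
  refine (Nat.card_congr ((Perm.subtypeEquivSubtypePerm p).subtypeEquiv fun w => ?_)).symm
  change w * w = 1 ↔ Perm.ofSubtype w * Perm.ofSubtype w = 1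
  rw [← map_mul, map_eq_one_iff _ Perm.ofSubtype_injective]

theorem mul_swap_mul_self [DecidableEq α] {w : Perm α} {a b : α} (hab : w a = b) (hba : w b = a) :
    w * swap a b * (w * swap a b) = w * w := by
  have h : Commute (swap a b) w := by
    rw [Commute, SemiconjBy, mul_swap_eq_swap_mul, hab, hba, swap_comm]
  rw [h.mul_mul_mul_comm, swap_mul_self, mul_one]

/-- Multiplication by the transposition of `a` and `b` makes `a` and `b` fixed points. -/
theorem natCard_involutions_apply_eq (a b : α) :
    Nat.card {w : Perm α // w * w = 1 ∧ w a = b} = numInvolutions {x // x ≠ a ∧ x ≠ b} := by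
  classical
  rw [← natCard_involutions_fixing]
  refine Nat.card_congr ((Equiv.mulRight (swap a b)).subtypeEquiv fun w => ?_)
  have hfix : (∀ x, ¬(x ≠ a ∧ x ≠ b) → (w * swap a b) x = x) ↔ w a = b ∧ w b = a := by
    simp only [not_and_or, not_not, or_imp, forall_and, forall_eq, Perm.mul_apply,
      swap_apply_left, swap_apply_right, and_comm]
  rw [Equiv.coe_mulRight, hfix]
  constructor
  · rintro ⟨hw, hab⟩
    have hba : w b = a := by rw [← hab, ← Perm.mul_apply, hw, Perm.one_apply]
    exact ⟨⟨hab, hba⟩, by rw [mul_swap_mul_self hab hba, hw]⟩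
  · rintro ⟨⟨hab, hba⟩, hw⟩
    exact ⟨by rw [← mul_swap_mul_self hab hba, hw], hab⟩

theorem numInvolutions_eq_sum [Fintype α] (a : α) :
    numInvolutions α = ∑ b, numInvolutions {x // x ≠ a ∧ x ≠ b} := by
  let value (w : {w : Perm α // w * w = 1}) : α := w.1 a
  rw [numInvolutions, ← Nat.card_congr (sigmaFiberEquiv value), Nat.card_sigma]
  refine sum_congr rfl fun b _ => ?_
  rw [← natCard_involutions_apply_eq]
  exact Nat.card_congr (subtypeSubtypeEquivSubtypeInter _ fun w : Perm α => w a = b)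

theorem numInvolutions_fin_add_two (n : ℕ) : numInvolutions (Fin (n + 2)) =
    numInvolutions (Fin (n + 1)) + (n + 1) * numInvolutions (Fin n) := by
  have hfix : numInvolutions {x : Fin (n + 2) // x ≠ 0 ∧ x ≠ 0} = numInvolutions (Fin (n + 1)) :=
    numInvolutions_congr (Fintype.equivFinOfCardEq (by simp))
  have hmove (b : Fin (n + 1)) :
      numInvolutions {x : Fin (n + 2) // x ≠ 0 ∧ x ≠ b.succ} = numInvolutions (Fin n) := by
    refine numInvolutions_congr (Fintype.equivFinOfCardEq ?_)
    have hcompl : ({x | x ≠ 0 ∧ x ≠ b.succ} : Finset (Fin (n + 2))) = {0, b.succ}ᶜ := by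
      ext x
      simp
    rw [Fintype.card_subtype, hcompl, card_compl, card_pair (Fin.succ_ne_zero b).symm,
      Fintype.card_fin, Nat.add_sub_cancel]
  rw [numInvolutions_eq_sum 0, Fin.sum_univ_succ, hfix, sum_congr rfl fun b _ => hmove b]
  simp

theorem numInvolutions_fin_eq_degree_chains (n : ℕ) :
    numInvolutions (Fin n) = (youngLattice.chains n).degree := by
  induction n using Nat.twoStepInduction with
  | zero => rw [numInvolutions_of_subsingleton, DifferentialPoset.degree_chains_zero]
  | one => rw [numInvolutions_of_subsingleton, DifferentialPoset.degree_chains_one]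
  | more n ih ih' =>
    rw [numInvolutions_fin_add_two, DifferentialPoset.degree_chains_add_two, ih, ih', one_mul,
      one_mul]

end Involutions

open Nat in
/-- The number of involutions in `Sₙ` equals `Σ_{λ⊢n} f_λ`, and `n! = Σ_{λ⊢n} f_λ²`,
where `f_λ` is the number of standard Young tableaux of shape `λ`. -/
theorem stmt13 (n : ℕ) :
    Nat.card {w : Equiv.Perm (Fin n) // w * w = 1} =
      ∑ p : n.Partition, Nat.card {T : SYT n // rowMult n T = p.parts} ∧
    n ! = ∑ p : n.Partition, (Nat.card {T : SYT n // rowMult n T = p.parts}) ^ 2 := by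
  simp only [natCard_rowMult_eq]
  have hchains : ∀ μ ∈ (youngLattice.chains n).support, μ.card = n := fun _ =>
    card_eq_of_mem_support_chains_youngLattice
  constructor
  · calc
      numInvolutions (Fin n) = (youngLattice.chains n).degree :=
        numInvolutions_fin_eq_degree_chains n
      _ = ∑ p : n.Partition, youngLattice.chains n (ofPartition p) :=
        (sum_ofPartition hchains (g := id) rfl).symm
  · calc
      n ! = (youngLattice.chains n).sum fun _ c => c ^ 2 := by
        rw [DifferentialPoset.sum_chains_sq, one_pow, one_mul]
      _ = ∑ p : n.Partition, youngLattice.chains n (ofPartition p) ^ 2 :=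
        (sum_ofPartition hchains (g := (· ^ 2)) rfl).symm
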